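/- Let X ∈ ℝ^{n×n} have rank r with condition number κ = σ₁(X)/σ_r(X), let y = 𝒜(X), and suppose the linear operator 𝒜 : ℝ^{n×n} → ℝ^m satisfies the restricted isometry property of rank 3r with constant δ_{3r} < 1/(12 κ √r). Consider the Riemannian gradient descent (RGrad) iteration: G_k = 𝒜*(y − 𝒜(Z_k)), Z_{k+1} = 𝒯_r(Z_k + α_k 𝒫_{T_k}(G_k)), where T_k = {U_k B^T + C V_k^T : B, C ∈ ℝ^{n×r}} is the tangent space of the rank-r matrix manifold at Z_k (with Z_k = U_k Σ_k V_k^T the compact SVD), 𝒫_{T_k} is the orthogonal projection onto T_k, and the stepsize is α_k = ‖𝒫_{T_k}(G_k)‖_F² / ‖𝒜(𝒫_{T_k}(G_k))‖₂², initialized by spectral initialization Z₀ = 𝒯_r(𝒜*(y)). Then the iterates converge linearly to X: there exists ρ ∈ (0,1) such that ‖Z_k − X‖_F ≤ ρ^k ‖Z₀ − X‖_F for all k. -/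

import Mathlib

noncomputable section

open scoped BigOperators
open Matrix

/-- Frobenius norm of a real matrix. -/
def frobNorm {n₁ n₂ : ℕ} (A : Matrix (Fin n₁) (Fin n₂) ℝ) : ℝ :=
  Real.sqrt (∑ i, ∑ j, (A i j) ^ 2)

/-- Euclidean (ℓ₂) norm of a real vector. -/
def l2norm {m : ℕ} (y : Fin m → ℝ) : ℝ :=
  Real.sqrt (∑ i, (y i) ^ 2)

/-- Frobenius (trace) inner product. -/
def frobInner {n : ℕ} (A B : Matrix (Fin n) (Fin n) ℝ) : ℝ :=
  ∑ i, ∑ j, A i j * B i j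

/-- Restricted isometry property of rank `s` with constant `δ`. -/
def HasRIP {n m : ℕ} (A : Matrix (Fin n) (Fin n) ℝ → (Fin m → ℝ)) (s : ℕ) (δ : ℝ) : Prop :=
  ∀ Z : Matrix (Fin n) (Fin n) ℝ, Z.rank ≤ s →
    (1 - δ) * frobNorm Z ^ 2 ≤ l2norm (A Z) ^ 2 ∧
    l2norm (A Z) ^ 2 ≤ (1 + δ) * frobNorm Z ^ 2

/-- `Z` is a best rank-`r` approximation of `M` in Frobenius norm. -/
def IsBestRankApprox {n : ℕ} (r : ℕ) (M Z : Matrix (Fin n) (Fin n) ℝ) : Prop :=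
  Z.rank ≤ r ∧ ∀ W : Matrix (Fin n) (Fin n) ℝ, W.rank ≤ r →
    frobNorm (M - Z) ≤ frobNorm (M - W)

/-- `P` is the orthogonal projection (w.r.t. the Frobenius inner product) of `G` onto the
tangent space `T = {U Bᵀ + C Vᵀ}` of the rank-`r` manifold. -/
def IsTanProj {n r : ℕ} (U V : Matrix (Fin n) (Fin r) ℝ)
    (G P : Matrix (Fin n) (Fin n) ℝ) : Prop :=
  (∃ B C : Matrix (Fin n) (Fin r) ℝ, P = U * Bᵀ + C * Vᵀ) ∧
  ∀ B C : Matrix (Fin n) (Fin r) ℝ, frobInner (G - P) (U * Bᵀ + C * Vᵀ) = 0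

section RGradHelpers

lemma rg_le_of_sq {a b : ℝ} (h : a ^ 2 ≤ b ^ 2) (hb : 0 ≤ b) : a ≤ b :=
  (abs_le_of_sq_le_sq' h hb).2

lemma rg_two {a w : ℝ} (ha : 0 ≤ a) (hw : 0 ≤ w) (h : a ^ 2 ≤ 2 * (w * a)) : a ≤ 2 * w := by
  rcases ha.eq_or_lt with h0 | h0
  · rw [← h0]; positivity
  · apply le_of_mul_le_mul_left _ h0
    linarith

lemma rg_ss {a b : ℕ} (A : Matrix (Fin a) (Fin b) ℝ) : 0 ≤ ∑ i, ∑ j, (A i j) ^ 2 :=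
  Finset.sum_nonneg fun i _ => Finset.sum_nonneg fun j _ => sq_nonneg _

lemma rg_rank_add {n : ℕ} (A B : Matrix (Fin n) (Fin n) ℝ) :
    (A + B).rank ≤ A.rank + B.rank := by
  unfold Matrix.rank
  rw [Matrix.mulVecLin_add]
  refine le_trans (Submodule.finrank_mono ?_)
    (Submodule.finrank_add_le_finrank_add_finrank _ _)
  rintro _ ⟨x, rfl⟩
  exact Submodule.add_mem_sup ⟨x, rfl⟩ ⟨x, rfl⟩

lemma rg_sq {a b : ℕ} (A : Matrix (Fin a) (Fin b) ℝ) : frobNorm A ^ 2 = (Aᵀ * A).trace := by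
  unfold frobNorm
  rw [Real.sq_sqrt (rg_ss A)]
  simp only [Matrix.trace, Matrix.diag, Matrix.mul_apply, Matrix.transpose_apply]
  rw [Finset.sum_comm]
  simp only [sq]

lemma rg_nonneg {a b : ℕ} (A : Matrix (Fin a) (Fin b) ℝ) : 0 ≤ frobNorm A := Real.sqrt_nonneg _

lemma rg_inner {a : ℕ} (A B : Matrix (Fin a) (Fin a) ℝ) : frobInner A B = (Aᵀ * B).trace := by
  unfold frobInner
  simp only [Matrix.trace, Matrix.diag, Matrix.mul_apply, Matrix.transpose_apply]
  rw [Finset.sum_comm]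

lemma rg_transpose {a b : ℕ} (A : Matrix (Fin a) (Fin b) ℝ) : frobNorm Aᵀ = frobNorm A := by
  unfold frobNorm
  rw [Finset.sum_comm]
  simp only [Matrix.transpose_apply]

lemma rg_mul {a b c : ℕ} (A : Matrix (Fin a) (Fin b) ℝ) (B : Matrix (Fin b) (Fin c) ℝ) :
    frobNorm (A * B) ≤ frobNorm A * frobNorm B := by
  unfold frobNorm
  rw [← Real.sqrt_mul (rg_ss A)]
  apply Real.sqrt_le_sqrt
  rw [Finset.sum_comm (s := Finset.univ (α := Fin b)), Finset.sum_mul_sum]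
  refine Finset.sum_le_sum fun i _ => Finset.sum_le_sum fun j _ => ?_
  rw [Matrix.mul_apply]
  exact Finset.sum_mul_sq_le_sq_mul_sq _ _ _

lemma rg_cs {a : ℕ} (A B : Matrix (Fin a) (Fin a) ℝ) :
    |frobInner A B| ≤ frobNorm A * frobNorm B := by
  unfold frobNorm frobInner
  rw [← Real.sqrt_mul (rg_ss A)]
  apply Real.abs_le_sqrt
  simp only [← Fintype.sum_prod_type']
  exact Finset.sum_mul_sq_le_sq_mul_sq _ _ _

lemma rg_comm {a : ℕ} (A B : Matrix (Fin a) (Fin a) ℝ) : frobInner A B = frobInner B A := by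
  simp only [frobInner, mul_comm]

lemma rg_self {a : ℕ} (A : Matrix (Fin a) (Fin a) ℝ) : frobInner A A = frobNorm A ^ 2 := by
  rw [rg_inner, rg_sq]

lemma rg_add_left {a : ℕ} (A B C : Matrix (Fin a) (Fin a) ℝ) :
    frobInner (A + B) C = frobInner A C + frobInner B C := by
  simp [rg_inner, Matrix.add_mul]

lemma rg_sub_left {a : ℕ} (A B C : Matrix (Fin a) (Fin a) ℝ) :
    frobInner (A - B) C = frobInner A C - frobInner B C := by
  simp [rg_inner, Matrix.sub_mul]

lemma rg_smul_left {a : ℕ} (t : ℝ) (A C : Matrix (Fin a) (Fin a) ℝ) :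
    frobInner (t • A) C = t * frobInner A C := by
  simp [rg_inner]

lemma rg_add_right {a : ℕ} (A B C : Matrix (Fin a) (Fin a) ℝ) :
    frobInner C (A + B) = frobInner C A + frobInner C B := by
  simp [rg_inner, Matrix.mul_add]

lemma rg_sub_right {a : ℕ} (A B C : Matrix (Fin a) (Fin a) ℝ) :
    frobInner C (A - B) = frobInner C A - frobInner C B := by
  simp [rg_inner, Matrix.mul_sub]

lemma rg_smul_right {a : ℕ} (t : ℝ) (A C : Matrix (Fin a) (Fin a) ℝ) :
    frobInner C (t • A) = t * frobInner C A := by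
  simp [rg_inner]

lemma rg_triangle {a : ℕ} (A B : Matrix (Fin a) (Fin a) ℝ) :
    frobNorm (A + B) ≤ frobNorm A + frobNorm B := by
  have h := (abs_le.1 (rg_cs A B)).2
  have e : frobNorm (A + B) ^ 2 = frobNorm A ^ 2 + 2 * frobInner A B + frobNorm B ^ 2 := by
    rw [← rg_self, ← rg_self, ← rg_self, rg_add_left, rg_add_right, rg_add_right, rg_comm B A]
    ring
  have h1 := rg_nonneg A
  have h2 := rg_nonneg B
  apply rg_le_of_sq _ (by positivity)
  nlinarith

lemma rg_eq_zero {a b : ℕ} (A : Matrix (Fin a) (Fin b) ℝ) (h : frobNorm A = 0) : A = 0 := by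
  have h2 := rg_sq A
  rw [h] at h2
  have := (Matrix.trace_conjTranspose_mul_self_eq_zero_iff (A := A)).1
    (by rw [Matrix.conjTranspose_eq_transpose_of_trivial, ← h2]; norm_num)
  exact this

/-- splitting of the norm along an isometry -/
lemma rg_split {a b c : ℕ} (M : Matrix (Fin a) (Fin b) ℝ) (V : Matrix (Fin b) (Fin c) ℝ)
    (hV : Vᵀ * V = 1) :
    frobNorm M ^ 2 = frobNorm (M * V) ^ 2 + frobNorm (M * (1 - V * Vᵀ)) ^ 2 := by
  rw [rg_sq, rg_sq, rg_sq]
  have hP : (1 - V * Vᵀ) * (1 - V * Vᵀ) = 1 - V * Vᵀ := by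
    have : V * Vᵀ * (V * Vᵀ) = V * Vᵀ := by
      rw [Matrix.mul_assoc, ← Matrix.mul_assoc Vᵀ, hV, Matrix.one_mul]
    simp [Matrix.mul_sub, Matrix.sub_mul, this]
  have hT : (1 - V * Vᵀ)ᵀ = 1 - V * Vᵀ := by simp
  have e1 : ((M * V)ᵀ * (M * V)).trace = (Mᵀ * M * (V * Vᵀ)).trace := by
    rw [Matrix.transpose_mul, Matrix.mul_assoc, Matrix.trace_mul_comm]
    simp only [Matrix.mul_assoc]
  have e2 : ((M * (1 - V * Vᵀ))ᵀ * (M * (1 - V * Vᵀ))).trace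
      = (Mᵀ * M * (1 - V * Vᵀ)).trace := by
    rw [Matrix.transpose_mul, hT, Matrix.mul_assoc, Matrix.trace_mul_comm,
      ← Matrix.mul_assoc Mᵀ, Matrix.mul_assoc, hP]
  rw [e1, e2, Matrix.mul_sub, Matrix.trace_sub, Matrix.mul_one]
  ring

lemma rg_right {a b c : ℕ} (M : Matrix (Fin a) (Fin b) ℝ) (V : Matrix (Fin b) (Fin c) ℝ)
    (hV : Vᵀ * V = 1) : frobNorm (M * V) ≤ frobNorm M := by
  apply rg_le_of_sq _ (rg_nonneg M)
  rw [rg_split M V hV]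
  linarith [sq_nonneg (frobNorm (M * (1 - V * Vᵀ)))]

lemma rg_right' {a b c : ℕ} (M : Matrix (Fin a) (Fin b) ℝ) (V : Matrix (Fin b) (Fin c) ℝ)
    (hV : Vᵀ * V = 1) : frobNorm (M * (1 - V * Vᵀ)) ≤ frobNorm M := by
  apply rg_le_of_sq _ (rg_nonneg M)
  rw [rg_split M V hV]
  linarith [sq_nonneg (frobNorm (M * V))]

lemma rg_left {a b c : ℕ} (M : Matrix (Fin a) (Fin b) ℝ) (V : Matrix (Fin a) (Fin c) ℝ)
    (hV : Vᵀ * V = 1) : frobNorm (Vᵀ * M) ≤ frobNorm M := by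
  rw [← rg_transpose, ← rg_transpose M, Matrix.transpose_mul, Matrix.transpose_transpose]
  exact rg_right _ _ hV

lemma rg_left' {a b c : ℕ} (M : Matrix (Fin a) (Fin b) ℝ) (V : Matrix (Fin a) (Fin c) ℝ)
    (hV : Vᵀ * V = 1) : frobNorm ((1 - V * Vᵀ) * M) ≤ frobNorm M := by
  rw [← rg_transpose, ← rg_transpose M, Matrix.transpose_mul]
  have hT : (1 - V * Vᵀ)ᵀ = 1 - V * Vᵀ := by simp
  rw [hT]
  exact rg_right' _ _ hV

lemma rg_diag {a r : ℕ} (M : Matrix (Fin a) (Fin r) ℝ) (σ : Fin r → ℝ) (s : ℝ) (hs : 0 ≤ s)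
    (h : ∀ i, s ≤ σ i) : s * frobNorm M ≤ frobNorm (M * Matrix.diagonal σ) := by
  unfold frobNorm
  apply Real.le_sqrt_of_sq_le
  rw [mul_pow, Real.sq_sqrt (rg_ss M)]
  simp only [Finset.mul_sum, Matrix.mul_diagonal]
  refine Finset.sum_le_sum fun i _ => Finset.sum_le_sum fun j _ => ?_
  rw [mul_pow, mul_comm]
  have := pow_le_pow_left₀ hs (h j) 2
  nlinarith [sq_nonneg (M i j)]

lemma rg_normX {n r : ℕ} (U V : Matrix (Fin n) (Fin r) ℝ) (σ : Fin r → ℝ) (S : ℝ)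
    (hU : Uᵀ * U = 1) (hV : Vᵀ * V = 1) (hσ : ∀ i, 0 ≤ σ i) (hS0 : 0 ≤ S) (hS : ∀ i, σ i ≤ S) :
    frobNorm (U * Matrix.diagonal σ * Vᵀ) ≤ Real.sqrt r * S := by
  have h1 : frobNorm (U * Matrix.diagonal σ * Vᵀ) ≤ frobNorm (Matrix.diagonal σ) := by
    apply rg_le_of_sq _ (rg_nonneg _)
    rw [rg_sq, rg_sq]
    apply le_of_eq
    simp only [Matrix.transpose_mul, Matrix.transpose_transpose, Matrix.diagonal_transpose]
    rw [Matrix.mul_assoc, Matrix.trace_mul_comm]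
    simp only [Matrix.mul_assoc]
    rw [hV, ← Matrix.mul_assoc Uᵀ, hU, Matrix.one_mul, Matrix.mul_one]
  refine h1.trans ?_
  apply rg_le_of_sq _ (by positivity)
  rw [rg_sq, Matrix.diagonal_transpose, Matrix.diagonal_mul_diagonal, Matrix.trace_diagonal,
    mul_pow, Real.sq_sqrt (Nat.cast_nonneg r)]
  calc ∑ i, σ i * σ i ≤ ∑ _i : Fin r, S ^ 2 :=
        Finset.sum_le_sum fun i _ => by nlinarith [hσ i, hS i]
    _ = _ := by simp

/-- bilinear form of the RIP -/
lemma rg_bil {n m s : ℕ} (𝒜 : Matrix (Fin n) (Fin n) ℝ →ₗ[ℝ] (Fin m → ℝ)) (δ : ℝ)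
    (hRIP : HasRIP (fun Z => 𝒜 Z) s δ) (Y W : Matrix (Fin n) (Fin n) ℝ)
    (h : ∀ a b : ℝ, (a • Y + b • W).rank ≤ s) :
    |∑ l, 𝒜 Y l * 𝒜 W l - frobInner Y W| ≤ δ * (frobNorm Y * frobNorm W) := by
  have key : ∀ t u : ℝ, |t * u| * |∑ l, 𝒜 Y l * 𝒜 W l - frobInner Y W| * 2
      ≤ δ * (t ^ 2 * frobNorm Y ^ 2 + u ^ 2 * frobNorm W ^ 2) := by
    intro t u
    have ln : ∀ v : Fin m → ℝ, l2norm v ^ 2 = ∑ i, v i ^ 2 := fun v => by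
      unfold l2norm
      rw [Real.sq_sqrt (Finset.sum_nonneg fun i _ => sq_nonneg _)]
    have q : ∀ a b : ℝ, frobNorm (a • Y + b • W) ^ 2
        = a ^ 2 * frobNorm Y ^ 2 + 2 * (a * b) * frobInner Y W + b ^ 2 * frobNorm W ^ 2 := by
      intro a b
      simp only [← rg_self, rg_add_left, rg_add_right, rg_smul_left, rg_smul_right, rg_comm W Y]
      ring
    have p : ∀ a b : ℝ, l2norm (𝒜 (a • Y + b • W)) ^ 2
        = a ^ 2 * l2norm (𝒜 Y) ^ 2 + 2 * (a * b) * ∑ l, 𝒜 Y l * 𝒜 W l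
          + b ^ 2 * l2norm (𝒜 W) ^ 2 := by
      intro a b
      simp only [ln, map_add, map_smul, Finset.mul_sum, ← Finset.sum_add_distrib]
      refine Finset.sum_congr rfl fun i _ => ?_
      simp
      ring
    have h1 := hRIP _ (h t u)
    have h2 := hRIP _ (h t (-u))
    simp only [q, p] at h1 h2
    rw [← abs_mul]
    have : |t * u * (∑ l, 𝒜 Y l * 𝒜 W l - frobInner Y W)|
      ≤ δ * (t ^ 2 * frobNorm Y ^ 2 + u ^ 2 * frobNorm W ^ 2) / 2 := by
      rw [abs_le]
      constructor <;> nlinarith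
    linarith
  have hY := rg_nonneg Y
  have hW := rg_nonneg W
  rcases hY.eq_or_lt with h0 | hY
  · have : Y = 0 := rg_eq_zero Y h0.symm
    subst this
    simp [rg_inner, ← h0]
  rcases hW.eq_or_lt with h0 | hW
  · have : W = 0 := rg_eq_zero W h0.symm
    subst this
    simp [rg_inner, ← h0]
  have k := key (frobNorm W) (frobNorm Y)
  rw [abs_of_pos (by positivity)] at k
  have hp : 0 < frobNorm W * frobNorm Y := by positivity
  apply le_of_mul_le_mul_left _ hp
  nlinarith

lemma rg_rank_smul {n : ℕ} (t : ℝ) (A : Matrix (Fin n) (Fin n) ℝ) : (t • A).rank ≤ A.rank := by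
  have : t • A = A * (t • (1 : Matrix (Fin n) (Fin n) ℝ)) := by simp
  rw [this]
  exact Matrix.rank_mul_le_left _ _

lemma rg_rank_tan {n r : ℕ} (U V B C : Matrix (Fin n) (Fin r) ℝ) :
    (U * Bᵀ + C * Vᵀ).rank ≤ 2 * r := by
  have h1 : (U * Bᵀ).rank ≤ r :=
    (Matrix.rank_mul_le_left _ _).trans ((Matrix.rank_le_width U))
  have h2 : (C * Vᵀ).rank ≤ r :=
    (Matrix.rank_mul_le_left _ _).trans ((Matrix.rank_le_width C))
  have := rg_rank_add (U * Bᵀ) (C * Vᵀ)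
  omega

lemma rg_normal {n r : ℕ} (U V : Matrix (Fin n) (Fin r) ℝ)
    (hU : Uᵀ * U = 1) (hV : Vᵀ * V = 1) (M : Matrix (Fin n) (Fin n) ℝ)
    (B C : Matrix (Fin n) (Fin r) ℝ) :
    frobInner (U * Bᵀ + C * Vᵀ) ((1 - U * Uᵀ) * M * (1 - V * Vᵀ)) = 0 := by
  rw [rg_add_left, rg_inner, rg_inner]
  have h1 : Uᵀ * (1 - U * Uᵀ) = 0 := by
    rw [Matrix.mul_sub, ← Matrix.mul_assoc, hU]; simp
  have h2 : (1 - V * Vᵀ) * V = 0 := by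
    rw [Matrix.sub_mul, Matrix.mul_assoc, hV]; simp
  have e1 : (U * Bᵀ)ᵀ * ((1 - U * Uᵀ) * M * (1 - V * Vᵀ)) = 0 := by
    rw [Matrix.transpose_mul, Matrix.transpose_transpose, Matrix.mul_assoc,
      ← Matrix.mul_assoc Uᵀ, ← Matrix.mul_assoc Uᵀ, h1]
    simp
  have e2 : ((C * Vᵀ)ᵀ * ((1 - U * Uᵀ) * M * (1 - V * Vᵀ))).trace = 0 := by
    rw [Matrix.trace_mul_comm, Matrix.transpose_mul, Matrix.transpose_transpose,
      Matrix.mul_assoc, ← Matrix.mul_assoc (1 - V * Vᵀ), h2]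
    simp
  rw [e1, e2]
  simp

/-- The normal component of `X` is quadratically small. -/
lemma rg_normal_bound {n r : ℕ} (U V Uk Vk : Matrix (Fin n) (Fin r) ℝ) (σ σk : Fin r → ℝ)
    (X Z : Matrix (Fin n) (Fin n) ℝ) (s : ℝ) (hs : 0 < s) (hsσ : ∀ i, s ≤ σ i)
    (hU : Uᵀ * U = 1) (hV : Vᵀ * V = 1) (hX : X = U * Matrix.diagonal σ * Vᵀ)
    (hUk : Ukᵀ * Uk = 1) (hVk : Vkᵀ * Vk = 1) (hZ : Z = Uk * Matrix.diagonal σk * Vkᵀ) :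
    (1 - Uk * Ukᵀ) * (X - Z) * (1 - Vk * Vkᵀ) = (1 - Uk * Ukᵀ) * X * (1 - Vk * Vkᵀ) ∧
    s * frobNorm ((1 - Uk * Ukᵀ) * X * (1 - Vk * Vkᵀ)) ≤ frobNorm (X - Z) ^ 2 := by
  have h1 : (1 - Uk * Ukᵀ) * Z = 0 := by
    rw [hZ, ← Matrix.mul_assoc, ← Matrix.mul_assoc, Matrix.sub_mul, Matrix.mul_assoc Uk, hUk]
    simp
  have h2 : Z * (1 - Vk * Vkᵀ) = 0 := by
    rw [hZ, Matrix.mul_assoc, Matrix.mul_sub, ← Matrix.mul_assoc, hVk]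
    simp
  refine ⟨by rw [Matrix.mul_sub _ X Z, h1, sub_zero], ?_⟩
  have hXV : X * V = U * Matrix.diagonal σ := by
    rw [hX, Matrix.mul_assoc, hV, Matrix.mul_one]
  have hUX : U * (Uᵀ * X) = X := by
    rw [hX, Matrix.mul_assoc U, ← Matrix.mul_assoc Uᵀ, hU, Matrix.one_mul]
  have a1 : (1 - Uk * Ukᵀ) * X * (1 - Vk * Vkᵀ)
      = ((1 - Uk * Ukᵀ) * U) * (Uᵀ * ((X - Z) * (1 - Vk * Vkᵀ))) := by
    rw [Matrix.sub_mul X Z, h2, sub_zero, Matrix.mul_assoc _ U, ← Matrix.mul_assoc Uᵀ,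
      ← Matrix.mul_assoc U, hUX, Matrix.mul_assoc]
  have a2 : s * frobNorm ((1 - Uk * Ukᵀ) * U) ≤ frobNorm (X - Z) := by
    refine (rg_diag _ σ s hs.le hsσ).trans ?_
    have : (1 - Uk * Ukᵀ) * U * Matrix.diagonal σ = (1 - Uk * Ukᵀ) * ((X - Z) * V) := by
      rw [← Matrix.mul_assoc, Matrix.mul_sub, h1, sub_zero, Matrix.mul_assoc, Matrix.mul_assoc,
        hXV]
    rw [this]
    exact (rg_left' _ _ hUk).trans (rg_right _ _ hV)
  have a3 : frobNorm (Uᵀ * ((X - Z) * (1 - Vk * Vkᵀ))) ≤ frobNorm (X - Z) :=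
    (rg_left _ _ hU).trans (rg_right' _ _ hVk)
  rw [a1]
  have a4 := rg_mul ((1 - Uk * Ukᵀ) * U) (Uᵀ * ((X - Z) * (1 - Vk * Vkᵀ)))
  calc _ ≤ s * (frobNorm ((1 - Uk * Ukᵀ) * U) * frobNorm (Uᵀ * ((X - Z) * (1 - Vk * Vkᵀ)))) :=
        mul_le_mul_of_nonneg_left a4 hs.le
    _ = (s * frobNorm ((1 - Uk * Ukᵀ) * U)) * frobNorm (Uᵀ * ((X - Z) * (1 - Vk * Vkᵀ))) := by
        ring
    _ ≤ frobNorm (X - Z) * frobNorm (X - Z) :=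
        mul_le_mul a2 a3 (rg_nonneg _) (rg_nonneg _)
    _ = _ := by ring

/-- Basic inequality for a best rank-r approximation. -/
lemma rg_best {n r : ℕ} (W Z X : Matrix (Fin n) (Fin n) ℝ) (h : IsBestRankApprox r W Z)
    (hX : X.rank ≤ r) : frobNorm (Z - X) ^ 2 ≤ 2 * frobInner (W - X) (Z - X) := by
  have h1 := pow_le_pow_left₀ (rg_nonneg _) (h.2 X hX) 2
  have e : W - Z = (W - X) - (Z - X) := by abel
  rw [e, ← rg_self, ← rg_self, rg_sub_left (W - X) (Z - X), rg_sub_right (W - X) (Z - X),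
    rg_sub_right (W - X) (Z - X), rg_comm (Z - X) (W - X), rg_self (Z - X)] at h1
  linarith

lemma rg_norm_sub {n : ℕ} (A B : Matrix (Fin n) (Fin n) ℝ) :
    frobNorm (A - B) = frobNorm (B - A) := by
  unfold frobNorm
  congr 1
  refine Finset.sum_congr rfl fun i _ => Finset.sum_congr rfl fun j _ => ?_
  simp only [Matrix.sub_apply]
  ring

set_option maxHeartbeats 1000000 in
lemma rg_step {n m r : ℕ}
    (X Z Z' P : Matrix (Fin n) (Fin n) ℝ) (U V Uk Vk : Matrix (Fin n) (Fin r) ℝ)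
    (σ σk : Fin r → ℝ) (s : ℝ) (hs : 0 < s) (hsσ : ∀ i, s ≤ σ i)
    (hU : Uᵀ * U = 1) (hV : Vᵀ * V = 1) (hX : X = U * Matrix.diagonal σ * Vᵀ)
    (hrank : X.rank = r)
    (𝒜 : Matrix (Fin n) (Fin n) ℝ →ₗ[ℝ] (Fin m → ℝ))
    (𝒜s : (Fin m → ℝ) →ₗ[ℝ] Matrix (Fin n) (Fin n) ℝ)
    (hadj : ∀ (Z : Matrix (Fin n) (Fin n) ℝ) (w : Fin m → ℝ),
      frobInner (𝒜s w) Z = ∑ ℓ, w ℓ * 𝒜 Z ℓ)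
    (δ : ℝ) (hδ0 : 0 < δ) (hδ : δ < 1 / 12)
    (hRIP : HasRIP (fun Z => 𝒜 Z) (3 * r) δ)
    (hUk : Ukᵀ * Uk = 1) (hVk : Vkᵀ * Vk = 1) (hZ : Z = Uk * Matrix.diagonal σk * Vkᵀ)
    (hP : IsTanProj Uk Vk (𝒜s (𝒜 X - 𝒜 Z)) P)
    (hZ' : IsBestRankApprox r (Z + (frobNorm P ^ 2 / l2norm (𝒜 P) ^ 2) • P) Z')
    (hε : frobNorm (Z - X) ≤ s / 6) :
    frobNorm (Z' - X) ≤ 8 / 11 * frobNorm (Z - X) := by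
  obtain ⟨⟨BP, CP, hPeq⟩, hPorth⟩ := hP
  have hPrank : P.rank ≤ 3 * r := by
    have := rg_rank_tan Uk Vk BP CP
    rw [hPeq]; omega
  -- normalise the stepsize
  obtain ⟨α, hα1, hα2, hα⟩ : ∃ α : ℝ, α * (1 - δ) ≤ 1 ∧ 1 ≤ α * (1 + δ) ∧
      (frobNorm P ^ 2 / l2norm (𝒜 P) ^ 2) • P = α • P := by
    by_cases h0 : P = 0
    · exact ⟨1, by linarith, by linarith, by simp [h0]⟩
    · have hp : 0 < frobNorm P :=
        lt_of_le_of_ne (rg_nonneg P) fun h => h0 (rg_eq_zero P h.symm)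
      obtain ⟨r1, r2⟩ := hRIP P hPrank
      have hp2 : 0 < frobNorm P ^ 2 := by positivity
      have hl : 0 < l2norm (𝒜 P) ^ 2 := lt_of_lt_of_le (by nlinarith) r1
      refine ⟨_, ?_, ?_, rfl⟩
      · rw [div_mul_eq_mul_div, div_le_one hl]; linarith
      · rw [div_mul_eq_mul_div, le_div_iff₀ hl]; linarith
  rw [hα] at hZ'
  set D := X - Z with hD
  obtain ⟨hNeq, hN⟩ := rg_normal_bound U V Uk Vk σ σk X Z s hs hsσ hU hV hX hUk hVk hZ
  set N := (1 - Uk * Ukᵀ) * X * (1 - Vk * Vkᵀ) with hNdef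
  have hNrank : N.rank ≤ r := by
    calc N.rank ≤ ((1 - Uk * Ukᵀ) * X).rank := Matrix.rank_mul_le_left _ _
      _ ≤ X.rank := Matrix.rank_mul_le_right _ _
      _ = r := hrank
  set H := D - N with hHdef
  have hH : ∃ B C : Matrix (Fin n) (Fin r) ℝ, H = Uk * Bᵀ + C * Vkᵀ := by
    refine ⟨(Ukᵀ * D)ᵀ, (1 - Uk * Ukᵀ) * D * Vk, ?_⟩
    rw [hHdef, ← hNeq, ← hD, Matrix.transpose_transpose]
    simp only [Matrix.mul_sub, Matrix.sub_mul, Matrix.mul_one, Matrix.one_mul, Matrix.mul_assoc]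
    abel
  obtain ⟨BH, CH, hHeq⟩ := hH
  set E := α • P - H with hE
  have hEeq : E = Uk * (α • BP - BH)ᵀ + (α • CP - CH) * Vkᵀ := by
    rw [hE, hPeq, hHeq]
    simp only [Matrix.transpose_sub, Matrix.transpose_smul, Matrix.mul_sub, Matrix.sub_mul,
      Matrix.mul_smul, Matrix.smul_mul, smul_add]
    abel
  have hEN : frobInner E N = 0 := by
    rw [hEeq]; exact rg_normal Uk Vk hUk hVk X _ _
  have hHN : frobInner H N = 0 := by
    rw [hHeq]; exact rg_normal Uk Vk hUk hVk X _ _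
  have bEH := rg_bil 𝒜 δ hRIP E H (fun a b => by
    have : a • E + b • H = Uk * (a • (α • BP - BH) + b • BH)ᵀ
        + (a • (α • CP - CH) + b • CH) * Vkᵀ := by
      rw [hEeq, hHeq]
      simp only [Matrix.transpose_add, Matrix.transpose_smul, Matrix.mul_add, Matrix.add_mul,
        Matrix.mul_smul, Matrix.smul_mul, smul_add]
      abel
    rw [this]
    have := rg_rank_tan Uk Vk (a • (α • BP - BH) + b • BH) (a • (α • CP - CH) + b • CH)
    omega)
  have bEN := rg_bil 𝒜 δ hRIP E N (fun a b => by
    have h1 := rg_rank_add (a • E) (b • N)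
    have h2 := rg_rank_smul a E
    have h3 := rg_rank_smul b N
    have h4 : E.rank ≤ 2 * r := by rw [hEeq]; exact rg_rank_tan _ _ _ _
    omega)
  rw [hEN, sub_zero] at bEN
  have hPE : frobInner E P = ∑ l, 𝒜 E l * 𝒜 H l + ∑ l, 𝒜 E l * 𝒜 N l := by
    have h1 := hPorth (α • BP - BH)  (α • CP - CH)
    rw [← hEeq, rg_sub_left, hadj] at h1
    rw [rg_comm, ← sub_eq_zero.1 h1, ← Finset.sum_add_distrib]
    refine Finset.sum_congr rfl fun l _ => ?_
    have : 𝒜 X - 𝒜 Z = 𝒜 H + 𝒜 N := by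
      rw [← map_sub, ← map_add, hHdef, sub_add_cancel]
    rw [this, Pi.add_apply]
    ring
  have hEE : frobNorm E ^ 2 = α * (∑ l, 𝒜 E l * 𝒜 H l - frobInner E H)
      + (α - 1) * frobInner E H + α * ∑ l, 𝒜 E l * 𝒜 N l := by
    have : frobInner E E = α * frobInner E P - frobInner E H := by
      conv_lhs => rw [hE, ← hE]
      rw [← rg_smul_right, ← rg_sub_right]
    rw [← rg_self, this, hPE]
    ring
  have hα0 : 0 < α := by
    by_contra hc
    push Not at hc
    nlinarith
  have nE := rg_nonneg E
  have nH := rg_nonneg H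
  have nN := rg_nonneg N
  have nD := rg_nonneg D
  have hDnorm : frobNorm (Z - X) = frobNorm D := rg_norm_sub _ _
  rw [hDnorm] at hε ⊢
  have hHD : frobNorm H ≤ frobNorm D := by
    apply rg_le_of_sq _ nD
    have : D = H + N := by rw [hHdef, sub_add_cancel]
    rw [this, ← rg_self (H + N), rg_add_left, rg_add_right, rg_add_right, rg_comm N H, hHN,
      rg_self, rg_self]
    nlinarith
  have hNs : 6 * frobNorm N ≤ frobNorm D := by
    apply le_of_mul_le_mul_left _ hs
    nlinarith
  have habs : |α - 1| ≤ α * δ := by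
    rw [abs_le]; constructor <;> linarith
  have hE2 : frobNorm E ≤ α * δ * (2 * frobNorm H + frobNorm N) := by
    have c := rg_cs E H
    have t1 : α * (∑ l, 𝒜 E l * 𝒜 H l - frobInner E H)
        ≤ α * (δ * (frobNorm E * frobNorm H)) :=
      mul_le_mul_of_nonneg_left ((le_abs_self _).trans bEH) hα0.le
    have t2 : (α - 1) * frobInner E H ≤ α * δ * (frobNorm E * frobNorm H) := by
      refine (le_abs_self _).trans ?_
      rw [abs_mul]
      exact mul_le_mul habs c (abs_nonneg _) (by positivity)
    have t3 : α * ∑ l, 𝒜 E l * 𝒜 N l ≤ α * (δ * (frobNorm E * frobNorm N)) :=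
      mul_le_mul_of_nonneg_left ((le_abs_self _).trans bEN) hα0.le
    rcases nE.eq_or_lt with h0 | h0
    · rw [← h0]; positivity
    · apply le_of_mul_le_mul_left _ h0
      nlinarith
  have hαδ : α * δ ≤ 1 / 11 := by nlinarith
  have hWX : frobNorm (Z + α • P - X) ≤ frobNorm E + frobNorm N := by
    rw [rg_norm_sub]
    have : X - (Z + α • P) = N - E := by
      rw [hE, hHdef, hD]; abel
    rw [this, rg_norm_sub]
    have h := rg_triangle E (-N)
    have h2 : frobNorm (-N) = frobNorm N := by
      have := rg_norm_sub 0 N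
      simpa using this
    rw [h2] at h
    rwa [sub_eq_add_neg]
  have hbest := rg_best _ _ X hZ' hrank.le
  have hc := (le_abs_self _).trans (rg_cs (Z + α • P - X) (Z' - X))
  have hZn := rg_nonneg (Z' - X)
  have h2 : frobNorm (Z' - X) ≤ 2 * frobNorm (Z + α • P - X) :=
    rg_two hZn (rg_nonneg _) (by linarith)
  have h3 : α * δ * (2 * frobNorm H + frobNorm N)
      ≤ 1 / 11 * (2 * frobNorm H + frobNorm N) :=
    mul_le_mul_of_nonneg_right hαδ (by positivity)
  linarith

end RGradHelpers

/-- RGrad, matrix sensing with spectral initialization: under the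
rank-`3r` RIP with `δ_{3r} < 1/(12 κ √r)`, Riemannian gradient descent converges
linearly: `‖Z_k − X‖_F ≤ ρᵏ ‖Z₀ − X‖_F` for some `ρ ∈ (0,1)`. -/
theorem rgrad_matrix_sensing (n m r : ℕ)
    (X : Matrix (Fin n) (Fin n) ℝ) (U V : Matrix (Fin n) (Fin r) ℝ) (σ : Fin r → ℝ)
    -- compact SVD of X (so κ = (⨆ i, σ i)/(⨅ i, σ i))
    (hU : Uᵀ * U = 1) (hV : Vᵀ * V = 1) (hσ : ∀ i, 0 < σ i)
    (hX : X = U * Matrix.diagonal σ * Vᵀ) (hrank : X.rank = r)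
    (𝒜 : Matrix (Fin n) (Fin n) ℝ →ₗ[ℝ] (Fin m → ℝ))
    (𝒜s : (Fin m → ℝ) →ₗ[ℝ] Matrix (Fin n) (Fin n) ℝ)
    (hadj : ∀ (Z : Matrix (Fin n) (Fin n) ℝ) (w : Fin m → ℝ),
      frobInner (𝒜s w) Z = ∑ ℓ, w ℓ * 𝒜 Z ℓ)
    (δ : ℝ) (hδ0 : 0 < δ)
    (hδ : δ < 1 / (12 * ((⨆ i, σ i) / (⨅ i, σ i)) * Real.sqrt r))
    (hRIP : HasRIP (fun Z => 𝒜 Z) (3 * r) δ)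
    (y : Fin m → ℝ) (hy : y = 𝒜 X)
    (Z : ℕ → Matrix (Fin n) (Fin n) ℝ)
    -- spectral initialization Z₀ = 𝒯_r(𝒜*(y))
    (hinit : IsBestRankApprox r (𝒜s y) (Z 0))
    -- RGrad iteration
    (hiter : ∀ k, ∃ (Uk Vk : Matrix (Fin n) (Fin r) ℝ) (σk : Fin r → ℝ)
      (P : Matrix (Fin n) (Fin n) ℝ),
      Ukᵀ * Uk = 1 ∧ Vkᵀ * Vk = 1 ∧ (∀ i, 0 ≤ σk i) ∧
      Z k = Uk * Matrix.diagonal σk * Vkᵀ ∧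
      IsTanProj Uk Vk (𝒜s (y - 𝒜 (Z k))) P ∧
      IsBestRankApprox r
        (Z k + (frobNorm P ^ 2 / l2norm (𝒜 P) ^ 2) • P) (Z (k + 1))) :
    ∃ ρ : ℝ, 0 < ρ ∧ ρ < 1 ∧
      ∀ k, frobNorm (Z k - X) ≤ ρ ^ k * frobNorm (Z 0 - X) := by
  have hr : 0 < r := by
    rcases Nat.eq_zero_or_pos r with h | h
    · subst h
      simp at hδ
      linarith
    · exact h
  have : Nonempty (Fin r) := ⟨⟨0, hr⟩⟩
  obtain ⟨i0, hi0⟩ := exists_eq_ciInf_of_finite (f := σ)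
  set s := ⨅ i, σ i with hsdef
  set S := ⨆ i, σ i with hSdef
  have hs : 0 < s := hi0 ▸ hσ i0
  have hsσ : ∀ i, s ≤ σ i := fun i => ciInf_le (Set.finite_range σ).bddBelow i
  have hσS : ∀ i, σ i ≤ S := fun i => le_ciSup (Set.finite_range σ).bddAbove i
  have hsS : s ≤ S := (hsσ i0).trans (hσS i0)
  have hS : 0 < S := hs.trans_le hsS
  have hsq : 1 ≤ Real.sqrt r := by
    rw [Real.one_le_sqrt]; exact_mod_cast hr
  have hκ : δ * (12 * S * Real.sqrt r) < s := by
    rw [lt_div_iff₀ (by positivity)] at hδ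
    have : δ * (12 * (S / s) * Real.sqrt r) = δ * (12 * S * Real.sqrt r) / s := by
      field_simp
    rw [this, div_lt_one hs] at hδ
    exact hδ
  have hδ12 : δ < 1 / 12 := by
    have : s ≤ S * Real.sqrt r := by nlinarith
    by_contra hc
    push Not at hc
    have : 0 < S * Real.sqrt r := by positivity
    nlinarith
  have hXn : frobNorm X ≤ Real.sqrt r * S := by
    rw [hX]; exact rg_normX U V σ S hU hV (fun i => (hσ i).le) hS.le hσS
  have h0 : frobNorm (Z 0 - X) ≤ s / 6 := by
    have hb := rg_best _ _ X hinit hrank.le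
    have hbil := rg_bil 𝒜 δ hRIP X (Z 0 - X) (fun a b => by
      have e : a • X + b • (Z 0 - X) = (a - b) • X + b • Z 0 := by
        rw [smul_sub, sub_smul]; abel
      rw [e]
      have h1 := rg_rank_add ((a - b) • X) (b • Z 0)
      have h2 := rg_rank_smul (a - b) X
      have h3 := rg_rank_smul b (Z 0)
      have h4 := hinit.1
      omega)
    rw [rg_sub_left, hadj, hy] at hb
    have hle := (le_abs_self _).trans hbil
    have nn := rg_nonneg (Z 0 - X)
    have h2 : frobNorm (Z 0 - X) ≤ 2 * (δ * frobNorm X) := by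
      rcases nn.eq_or_lt with h0 | h0
      · rw [← h0]
        have := rg_nonneg X
        positivity
      · apply le_of_mul_le_mul_left _ h0
        nlinarith
    have := mul_le_mul_of_nonneg_left hXn hδ0.le
    linarith
  have main : ∀ k, frobNorm (Z k - X) ≤ s / 6 ∧
      frobNorm (Z k - X) ≤ (8 / 11 : ℝ) ^ k * frobNorm (Z 0 - X) := by
    intro k
    induction k with
    | zero => exact ⟨h0, by simp⟩
    | succ k ih =>
      obtain ⟨Uk, Vk, σk, P, hUk, hVk, _, hZk, hP, hbest⟩ := hiter k
      rw [hy] at hP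
      have st := rg_step X (Z k) (Z (k + 1)) P U V Uk Vk σ σk s hs hsσ hU hV hX hrank 𝒜 𝒜s hadj
        δ hδ0 hδ12 hRIP hUk hVk hZk hP hbest ih.1
      have nn := rg_nonneg (Z k - X)
      refine ⟨by linarith [ih.1], ?_⟩
      rw [pow_succ]
      linarith [ih.2]
  exact ⟨8 / 11, by norm_num, by norm_num, fun k => (main k).2⟩
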